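/- arXiv:1407.6912 — 5 statements merged into one kernel-verified Lean document; each statement's English description precedes it below -/
import Mathlib

section
/- Let a₁, a₂, a₃ be nonzero real numbers that are pairwise distinct, let γ = diag(a₁,a₂,a₃), and let f : Matrix (Fin 3) (Fin 3) ℝ → ℂ be continuous with compact support. Then the function (x,y,z) ↦ f( u(x,y,z)⁻¹ · γ · u(x,y,z) ) is integrable on ℝ³ with respect to Lebesgue measure; i.e. the elliptic orbital integral ∫_{ℝ³} f(u(x,y,z)⁻¹ γ u(x,y,z)) dx dy dz converges absolutely. -/
open MeasureTheory

/-- The upper unitriangular matrix `u(x,y,z)` with rows `(1,x,z), (0,1,y), (0,0,1)`,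
parametrizing the unipotent radical `U` of the upper-triangular Borel subgroup of
`SL(3,ℝ)` by `(x,y,z) ∈ ℝ³`. -/
noncomputable def uMat (p : ℝ × ℝ × ℝ) : Matrix (Fin 3) (Fin 3) ℝ :=
  !![1, p.1, p.2.2; 0, 1, p.2.1; 0, 0, 1]

/-- For `γ = diag(a₁,a₂,a₃)` with nonzero, pairwise distinct entries, and `f` continuous
with compact support, the elliptic orbital integral
`∫_{ℝ³} f(u(x,y,z)⁻¹ γ u(x,y,z)) dx dy dz` converges absolutely. -/
theorem elliptic_orbital_integrable
    (a₁ a₂ a₃ : ℝ) (h₁ : a₁ ≠ 0) (h₂ : a₂ ≠ 0) (h₃ : a₃ ≠ 0)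
    (h₁₂ : a₁ ≠ a₂) (h₁₃ : a₁ ≠ a₃) (h₂₃ : a₂ ≠ a₃)
    (f : Matrix (Fin 3) (Fin 3) ℝ → ℂ) (hf : Continuous f) (hsupp : HasCompactSupport f) :
    Integrable
      (fun p : ℝ × ℝ × ℝ => f ((uMat p)⁻¹ * Matrix.diagonal ![a₁, a₂, a₃] * uMat p)) := by
  have hinv : ∀ p : ℝ × ℝ × ℝ, (uMat p)⁻¹ =
      !![1, -p.1, p.1 * p.2.1 - p.2.2; 0, 1, -p.2.1; 0, 0, 1] := by
    intro p
    apply Matrix.inv_eq_left_inv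
    ext i j
    fin_cases i <;> fin_cases j <;> simp [uMat, Matrix.mul_apply, Fin.sum_univ_three] <;> ring
  have hconj : ∀ p : ℝ × ℝ × ℝ,
      (uMat p)⁻¹ * Matrix.diagonal ![a₁, a₂, a₃] * uMat p =
      !![a₁, (a₁ - a₂) * p.1, (a₁ - a₃) * p.2.2 + (a₃ - a₂) * (p.1 * p.2.1);
        0, a₂, (a₂ - a₃) * p.2.1; 0, 0, a₃] := by
    intro p
    have hd : Matrix.diagonal ![a₁, a₂, a₃] = !![a₁, 0, 0; 0, a₂, 0; 0, 0, a₃] := by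
      ext i j
      fin_cases i <;> fin_cases j <;> simp
    rw [hinv, hd]
    ext i j
    fin_cases i <;> fin_cases j <;>
      simp [uMat, Matrix.mul_apply, Fin.sum_univ_three] <;> ring
  simp_rw [hconj]
  have d₁₂ : a₁ - a₂ ≠ 0 := sub_ne_zero.mpr h₁₂
  have d₁₃ : a₁ - a₃ ≠ 0 := sub_ne_zero.mpr h₁₃
  have d₂₃ : a₂ - a₃ ≠ 0 := sub_ne_zero.mpr h₂₃
  set φ : ℝ × ℝ × ℝ → Matrix (Fin 3) (Fin 3) ℝ := fun p =>
      !![a₁, (a₁ - a₂) * p.1, (a₁ - a₃) * p.2.2 + (a₃ - a₂) * (p.1 * p.2.1);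
        0, a₂, (a₂ - a₃) * p.2.1; 0, 0, a₃] with hφ
  have hφc : Continuous φ := by
    refine continuous_matrix fun i j => ?_
    fin_cases i <;> fin_cases j <;> simp [hφ] <;> fun_prop
  -- a continuous left inverse of the orbit map
  let ψ : Matrix (Fin 3) (Fin 3) ℝ → ℝ × ℝ × ℝ := fun M =>
    ((a₁ - a₂)⁻¹ * M 0 1, (a₂ - a₃)⁻¹ * M 1 2,
      (a₁ - a₃)⁻¹ * (M 0 2 - (a₃ - a₂) * (((a₁ - a₂)⁻¹ * M 0 1) * ((a₂ - a₃)⁻¹ * M 1 2))))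
  have hψc : Continuous ψ := by
    have he : ∀ i j, Continuous fun M : Matrix (Fin 3) (Fin 3) ℝ => M i j :=
      fun i j => continuous_id.matrix_elem i j
    have h01 := he 0 1
    have h12 := he 1 2
    have h02 := he 0 2
    fun_prop
  have hleft : Function.LeftInverse ψ φ := by
    rintro ⟨x, y, z⟩
    simp [ψ, hφ, d₁₂, d₁₃, d₂₃]
  have hemb : Topology.IsClosedEmbedding φ := hleft.isClosedEmbedding hψc hφc
  exact (hf.comp hφc).integrable_of_hasCompactSupport (hsupp.comp_isClosedEmbedding hemb)
end

section
/- Let a₁, a₂, a₃ be nonzero real numbers that are pairwise distinct, let γ = diag(a₁,a₂,a₃), and let f : Matrix (Fin 3) (Fin 3) ℝ → ℂ be continuous with compact support. Then ∫_{ℝ³} f( u(x,y,z)⁻¹ · γ · u(x,y,z) ) dx dy dz = |a₁|²·|a₂| · |a₁−a₂|⁻¹ · |a₂−a₃|⁻¹ · |a₁−a₃|⁻¹ · ∫_{ℝ³} f( γ · u(x,y,z) ) dx dy dz. In particular the elliptic orbital integral of f over the conjugation orbit of γ by the unipotent group U equals, up to the explicit Jacobian factor ∏_{1≤i<j≤3}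 |a_i−a_j|⁻¹ times |a₁²a₂|, the integral of the translate of f by γ over U. -/
open MeasureTheory

theorem scale_integral (a b c : ℝ) (ha : a ≠ 0) (hb : b ≠ 0) (hc : c ≠ 0)
    (g : ℝ × ℝ × ℝ → ℂ) (hg : Continuous g) :
    ∫ p : ℝ × ℝ × ℝ, g (a * p.1, b * p.2.1, c * p.2.2) =
      (|a|⁻¹ * |b|⁻¹ * |c|⁻¹) • ∫ p, g p := by
  let L : (ℝ × ℝ × ℝ) →ₗ[ℝ] (ℝ × ℝ × ℝ) :=
    (a • LinearMap.id).prodMap ((b • LinearMap.id).prodMap (c • LinearMap.id))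
  have hdet : LinearMap.det L = a * (b * c) := by
    simp [L, LinearMap.det_prodMap]
  have hne : LinearMap.det L ≠ 0 := by
    rw [hdet]; positivity
  haveI i1 : (volume : Measure (ℝ × ℝ)).IsAddHaarMeasure :=
    inferInstanceAs ((volume : Measure ℝ).prod (volume : Measure ℝ)).IsAddHaarMeasure
  haveI i2 : (volume : Measure (ℝ × ℝ × ℝ)).IsAddHaarMeasure :=
    inferInstanceAs ((volume : Measure ℝ).prod (volume : Measure (ℝ × ℝ))).IsAddHaarMeasure
  have hmap := Measure.map_linearMap_addHaar_eq_smul_addHaar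
    (volume : Measure (ℝ × ℝ × ℝ)) hne
  have hLc : Continuous L := L.continuous_of_finiteDimensional
  have h := integral_map (μ := (volume : Measure (ℝ × ℝ × ℝ))) hLc.aemeasurable
    (f := g) hg.aestronglyMeasurable
  rw [hmap, integral_smul_measure, ENNReal.toReal_ofReal (abs_nonneg _), hdet] at h
  have e : (|a|⁻¹ * |b|⁻¹ * |c|⁻¹) = |(a * (b * c))⁻¹| := by
    rw [abs_inv, abs_mul, abs_mul, mul_inv, mul_inv, mul_assoc]
  rw [e, h]
  rfl

theorem shear_integral (d : ℝ) (g : ℝ × ℝ × ℝ → ℂ) (hg : Continuous g) :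
    ∫ p : ℝ × ℝ × ℝ, g (p.1, p.2.1, p.2.2 + d * p.1 * p.2.1) = ∫ p, g p := by
  have h1 : ∀ x : ℝ, MeasurePreserving (fun q : ℝ × ℝ => (q.1, q.2 + d * x * q.1))
      (volume.prod volume) (volume.prod volume) := by
    intro x
    refine (MeasurePreserving.id (volume : Measure ℝ)).skew_product
      (g := fun y z => z + d * x * y) (by fun_prop) ?_
    filter_upwards with y
    exact (measurePreserving_add_right volume (d * x * y)).map_eq
  have h2 : MeasurePreserving
      (fun p : ℝ × ℝ × ℝ => (p.1, p.2.1, p.2.2 + d * p.1 * p.2.1))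
      ((volume : Measure ℝ).prod ((volume : Measure ℝ).prod (volume : Measure ℝ)))
      ((volume : Measure ℝ).prod ((volume : Measure ℝ).prod (volume : Measure ℝ))) := by
    refine (MeasurePreserving.id (volume : Measure ℝ)).skew_product
      (g := fun x (q : ℝ × ℝ) => (q.1, q.2 + d * x * q.1)) (by fun_prop) ?_
    filter_upwards with x
    exact (h1 x).map_eq
  have h := integral_map
    (μ := (volume : Measure ℝ).prod ((volume : Measure ℝ).prod (volume : Measure ℝ))) h2.measurable.aemeasurable (f := g) hg.aestronglyMeasurable
  rw [h2.map_eq] at h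
  exact h.symm

theorem uMat_inv (p : ℝ × ℝ × ℝ) :
    (uMat p)⁻¹ = !![1, -p.1, p.1 * p.2.1 - p.2.2; 0, 1, -p.2.1; 0, 0, 1] := by
  apply Matrix.inv_eq_left_inv
  ext i j
  fin_cases i <;> fin_cases j <;> simp [uMat, Matrix.mul_apply, Fin.sum_univ_three] <;> ring

/-- For `γ = diag(a₁,a₂,a₃)` with nonzero, pairwise distinct entries, and `f` continuous
with compact support, the elliptic orbital integral equals
`|a₁|²|a₂| · |a₁-a₂|⁻¹|a₂-a₃|⁻¹|a₁-a₃|⁻¹` times `∫_{ℝ³} f(γ·u(x,y,z)) dx dy dz`. -/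
theorem elliptic_orbital_integral_eq
    (a₁ a₂ a₃ : ℝ) (h₁ : a₁ ≠ 0) (h₂ : a₂ ≠ 0) (h₃ : a₃ ≠ 0)
    (h₁₂ : a₁ ≠ a₂) (h₁₃ : a₁ ≠ a₃) (h₂₃ : a₂ ≠ a₃)
    (f : Matrix (Fin 3) (Fin 3) ℝ → ℂ) (hf : Continuous f) (hsupp : HasCompactSupport f) :
    ∫ p : ℝ × ℝ × ℝ, f ((uMat p)⁻¹ * Matrix.diagonal ![a₁, a₂, a₃] * uMat p)
      = (|a₁| ^ 2 * |a₂| * (|a₁ - a₂|⁻¹ * |a₂ - a₃|⁻¹ * |a₁ - a₃|⁻¹)) •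
          ∫ p : ℝ × ℝ × ℝ, f (Matrix.diagonal ![a₁, a₂, a₃] * uMat p) := by
  have k₁₂ := sub_ne_zero.mpr h₁₂
  have k₁₃ := sub_ne_zero.mpr h₁₃
  have k₂₃ := sub_ne_zero.mpr h₂₃
  let M : ℝ × ℝ × ℝ → Matrix (Fin 3) (Fin 3) ℝ :=
    fun p => !![a₁, p.1, p.2.2; 0, a₂, p.2.1; 0, 0, a₃]
  have hM : Continuous M := by
    refine continuous_matrix fun i j => ?_
    fin_cases i <;> fin_cases j <;> simp [M] <;> fun_prop
  let g : ℝ × ℝ × ℝ → ℂ := fun p => f (M p)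
  have hg : Continuous g := hf.comp hM
  let d : ℝ := (a₃ - a₂) / ((a₁ - a₂) * (a₂ - a₃))
  have hL : ∀ p : ℝ × ℝ × ℝ, f ((uMat p)⁻¹ * Matrix.diagonal ![a₁, a₂, a₃] * uMat p) =
      (fun q : ℝ × ℝ × ℝ => g (q.1, q.2.1, q.2.2 + d * q.1 * q.2.1))
        ((a₁ - a₂) * p.1, (a₂ - a₃) * p.2.1, (a₁ - a₃) * p.2.2) := by
    intro p
    have hd : d * ((a₁ - a₂) * p.1) * ((a₂ - a₃) * p.2.1) = (a₃ - a₂) * p.1 * p.2.1 := by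
      simp only [d]; field_simp
    simp only [g, M, hd]
    congr 1
    rw [uMat_inv]
    ext i j
    fin_cases i <;> fin_cases j <;>
      simp [uMat, Matrix.mul_apply, Fin.sum_univ_three, Matrix.vecMul_diagonal] <;> ring
  have hR : ∀ p : ℝ × ℝ × ℝ, f (Matrix.diagonal ![a₁, a₂, a₃] * uMat p) =
      g (a₁ * p.1, a₂ * p.2.1, a₁ * p.2.2) := by
    intro p
    simp only [g, M]
    congr 1
    ext i j
    fin_cases i <;> fin_cases j <;> simp [uMat]
  simp_rw [hR]
  rw [integral_congr_ae (Filter.Eventually.of_forall hL),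
    scale_integral _ _ _ k₁₂ k₂₃ k₁₃
      (fun q : ℝ × ℝ × ℝ => g (q.1, q.2.1, q.2.2 + d * q.1 * q.2.1)) (by fun_prop), shear_integral d g hg,
    scale_integral _ _ _ h₁ h₂ h₁ g hg, smul_smul]
  congr 1
  have := abs_ne_zero.mpr h₁
  have := abs_ne_zero.mpr h₂
  have := abs_ne_zero.mpr k₁₂
  have := abs_ne_zero.mpr k₁₃
  have := abs_ne_zero.mpr k₂₃
  field_simp
end

section
/- Let f : Matrix (Fin 3) (Fin 3) ℝ → ℂ be smooth with compact support. Then the map (a₁,a₂) ↦ ∫_{ℝ³} f( diag(a₁,a₂,(a₁a₂)⁻¹) · u(x,y,z) ) dx dy dz is a smooth function on (0,∞) × (0,∞). Consequently, the normalized orbital integral f^H(γ) := ∏_{1≤i<j≤3} |a_i−a_j| · ∫_{ℝ³} f(u(x,y,z)⁻¹ γ u(x,y,z)) dx dy dz, defined for regular γ = diag(a₁,a₂,a₃) with a₁,a₂ > 0, a₃ = (a₁a₂)⁻¹ and a₁,a₂,a₃ pairwise distinct, extends (after division by the factor |a₁|²|a₂|) to a smooth function of (a₁,a₂) on all of (0,∞)²,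 including the non-regular points. -/
open MeasureTheory

/-- The upper unitriangular matrix `u(x,y,z)` with rows `(1,x,z), (0,1,y), (0,0,1)`,
parametrizing the unipotent radical `U` of the upper-triangular Borel subgroup of
`SL(3,ℝ)` by `(x,y,z) ∈ ℝ³`. -/
noncomputable instance : NormedAddCommGroup (Matrix (Fin 3) (Fin 3) ℝ) :=
  Matrix.normedAddCommGroup

noncomputable instance : NormedSpace ℝ (Matrix (Fin 3) (Fin 3) ℝ) :=
  Matrix.normedSpace

/-- Upper triangular matrix with given diagonal and upper entries. -/
noncomputable def tMat (a : ℝ × ℝ) (p : ℝ × ℝ × ℝ) : Matrix (Fin 3) (Fin 3) ℝ :=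
  !![a.1, p.1, p.2.2; 0, a.2, p.2.1; 0, 0, (a.1 * a.2)⁻¹]

theorem diag_mul_uMat (a : ℝ × ℝ) (p : ℝ × ℝ × ℝ) :
    Matrix.diagonal ![a.1, a.2, (a.1 * a.2)⁻¹] * uMat p
      = tMat a (a.1 * p.1, a.2 * p.2.1, a.1 * p.2.2 + 0 * p.1 * p.2.1) := by
  ext i j
  fin_cases i <;> fin_cases j <;> simp [uMat, tMat, Matrix.mul_apply, Fin.sum_univ_three]

theorem conj_uMat (a : ℝ × ℝ) (p : ℝ × ℝ × ℝ) :
    (uMat p)⁻¹ * Matrix.diagonal ![a.1, a.2, (a.1 * a.2)⁻¹] * uMat p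
      = tMat a ((a.1 - a.2) * p.1, (a.2 - (a.1 * a.2)⁻¹) * p.2.1,
          (a.1 - (a.1 * a.2)⁻¹) * p.2.2 + (-(a.2 - (a.1 * a.2)⁻¹)) * p.1 * p.2.1) := by
  rw [uMat_inv]
  ext i j
  fin_cases i <;> fin_cases j <;>
    simp [uMat, tMat, Matrix.mul_apply, Matrix.vecMul_diagonal, Fin.sum_univ_three] <;> ring

theorem scale_mp (α : ℝ) (hα : α ≠ 0) (c : ℝ) :
    Measure.map (fun z : ℝ => α * z + c) volume = ENNReal.ofReal |α⁻¹| • volume := by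
  have : (fun z : ℝ => α * z + c) = (fun z => z + c) ∘ (fun z => α * z) := rfl
  rw [this, ← Measure.map_map (by fun_prop) (by fun_prop), Real.map_volume_mul_left hα,
    Measure.map_smul, map_add_right_eq_self]

theorem shear_mp (α β γ c : ℝ) (hα : α ≠ 0) (hβ : β ≠ 0) (hγ : γ ≠ 0) :
    MeasurePreserving (fun p : ℝ × ℝ × ℝ => (α * p.1, β * p.2.1, γ * p.2.2 + c * p.1 * p.2.1))
      volume (ENNReal.ofReal |(α * β * γ)⁻¹| • volume) := by
  have key : ∀ x : ℝ, Measure.map (fun q : ℝ × ℝ => (β * q.1, γ * q.2 + c * x * q.1))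
      (volume.prod volume)
      = (ENNReal.ofReal |β⁻¹| • volume).prod (ENNReal.ofReal |γ⁻¹| • (volume : Measure ℝ)) := by
    intro x
    refine (MeasurePreserving.skew_product (g := fun y z => γ * z + c * x * y)
      (f := fun y => β * y) ⟨by fun_prop, ?_⟩ (by fun_prop) ?_).map_eq
    · simpa using scale_mp β hβ 0
    · exact Filter.Eventually.of_forall fun y => scale_mp γ hγ _
  have h := (MeasurePreserving.skew_product
      (μa := (volume : Measure ℝ)) (μc := (volume : Measure ℝ).prod (volume : Measure ℝ))
      (μb := ENNReal.ofReal |α⁻¹| • (volume : Measure ℝ))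
      (g := fun x (q : ℝ × ℝ) => (β * q.1, γ * q.2 + c * x * q.1))
      (f := fun x => α * x) ⟨by fun_prop, by simpa using scale_mp α hα 0⟩ (by fun_prop)
      (Filter.Eventually.of_forall key))
  have e : ENNReal.ofReal |(α * β * γ)⁻¹| • (volume : Measure (ℝ × ℝ × ℝ))
    = (ENNReal.ofReal |α⁻¹| • (volume : Measure ℝ)).prod
      ((ENNReal.ofReal |β⁻¹| • volume).prod (ENNReal.ofReal |γ⁻¹| • (volume : Measure ℝ))) := by
    rw [Measure.prod_smul_left, Measure.prod_smul_left, Measure.prod_smul_right,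
      Measure.prod_smul_right, Measure.prod_smul_right, smul_smul, smul_smul,
      ← ENNReal.ofReal_mul (by positivity), ← ENNReal.ofReal_mul (by positivity),
      ← abs_mul, ← abs_mul, mul_inv, mul_inv]
    rfl
  rw [e]
  exact h

theorem integral_shear (F : ℝ × ℝ × ℝ → ℂ) (hF : Continuous F) (α β γ c : ℝ)
    (hα : α ≠ 0) (hβ : β ≠ 0) (hγ : γ ≠ 0) :
    |α * β * γ| • ∫ p : ℝ × ℝ × ℝ, F (α * p.1, β * p.2.1, γ * p.2.2 + c * p.1 * p.2.1)
      = ∫ p, F p := by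
  have h := shear_mp α β γ c hα hβ hγ
  rw [← integral_map (f := F) h.aemeasurable hF.aestronglyMeasurable, h.map_eq,
    integral_smul_measure, ENNReal.toReal_ofReal (abs_nonneg _), smul_smul, ← abs_mul,
    mul_inv_cancel₀ (by positivity)]
  simp

theorem tMat_continuous (a : ℝ × ℝ) : Continuous (tMat a) := by
  refine continuous_matrix fun i j => ?_
  fin_cases i <;> fin_cases j <;> simp [tMat] <;> fun_prop

theorem tMat_contDiffOn : ContDiffOn ℝ (⊤ : ℕ∞) (fun q : (ℝ × ℝ) × (ℝ × ℝ × ℝ) => tMat q.1 q.2)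
    ((Set.Ioi (0:ℝ) ×ˢ Set.Ioi (0:ℝ)) ×ˢ Set.univ) := by
  suffices h : ContDiffOn ℝ (⊤ : ℕ∞)
      (fun (q : (ℝ × ℝ) × (ℝ × ℝ × ℝ)) (i j : Fin 3) => tMat q.1 q.2 i j)
      ((Set.Ioi (0:ℝ) ×ˢ Set.Ioi (0:ℝ)) ×ˢ Set.univ) from h
  rw [contDiffOn_pi]
  intro i
  rw [contDiffOn_pi]
  intro j
  have h : ContDiffOn ℝ (⊤ : ℕ∞) (fun q : (ℝ × ℝ) × (ℝ × ℝ × ℝ) => (q.1.1 * q.1.2)⁻¹)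
    ((Set.Ioi (0:ℝ) ×ˢ Set.Ioi (0:ℝ)) ×ˢ Set.univ) := by
    refine ContDiffOn.inv (by fun_prop) ?_
    rintro ⟨⟨x, y⟩, p⟩ ⟨⟨hx, hy⟩, -⟩
    exact (mul_pos hx hy).ne'
  fin_cases i <;> fin_cases j <;> simp [tMat] <;> first | fun_prop | simpa using h

theorem smooth_param (f : Matrix (Fin 3) (Fin 3) ℝ → ℂ)
    (hf : ContDiff ℝ (⊤ : ℕ∞) f) (hsupp : HasCompactSupport f) :
    ContDiffOn ℝ (⊤ : ℕ∞) (fun a : ℝ × ℝ => ∫ p : ℝ × ℝ × ℝ, f (tMat a p))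
      (Set.Ioi (0:ℝ) ×ˢ Set.Ioi (0:ℝ)) := by
  let pr : Matrix (Fin 3) (Fin 3) ℝ → ℝ × ℝ × ℝ := fun M => (M 0 1, M 1 2, M 0 2)
  have hpr : Continuous pr := by
    refine (continuous_id.matrix_elem 0 1).prodMk
      ((continuous_id.matrix_elem 1 2).prodMk (continuous_id.matrix_elem 0 2))
  have h := MeasureTheory.contDiffOn_convolution_right_with_param (𝕜 := ℝ) (n := ⊤)
    (μ := (volume : Measure (ℝ × ℝ × ℝ)))
    (ContinuousLinearMap.lsmul ℝ ℝ : ℝ →L[ℝ] ℂ →L[ℝ] ℂ)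
    (s := Set.Ioi (0:ℝ) ×ˢ Set.Ioi (0:ℝ)) (f := fun _ => (1 : ℝ))
    (g := fun a p => f (tMat a p)) (k := pr '' tsupport f)
    (isOpen_Ioi.prod isOpen_Ioi) (IsCompact.image hsupp hpr) ?_ (locallyIntegrable_const _) ?_
  · have h2 := h.comp (s := Set.Ioi (0:ℝ) ×ˢ Set.Ioi (0:ℝ))
      (f := fun a : ℝ × ℝ => (a, (0 : ℝ × ℝ × ℝ))) (by fun_prop)
      (fun a ha => ⟨ha, Set.mem_univ _⟩)
    refine h2.congr fun a _ => ?_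
    simp only [Function.comp, convolution_def, zero_sub, ContinuousLinearMap.lsmul_apply, one_smul]
    rw [← integral_shear (fun p => f (tMat a p)) (hf.continuous.comp (tMat_continuous a)) (-1) (-1) (-1) 0
      (by norm_num) (by norm_num) (by norm_num)]
    have e : ∀ p : ℝ × ℝ × ℝ, -p
        = ((-1) * p.1, (-1) * p.2.1, (-1) * p.2.2 + 0 * p.1 * p.2.1) := by
      rintro ⟨x, y, z⟩
      simp
    simp only [← e]
    simp
  · intro a p _ hp
    by_contra hne
    exact hp ⟨tMat a p, subset_tsupport _ hne, by simp [pr, tMat]⟩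
  · exact hf.comp_contDiffOn tMat_contDiffOn

theorem normalized_orbital_integral_smooth
    (f : Matrix (Fin 3) (Fin 3) ℝ → ℂ)
    (hf : ContDiff ℝ (⊤ : ℕ∞) f) (hsupp : HasCompactSupport f) :
    ContDiffOn ℝ (⊤ : ℕ∞)
      (fun a : ℝ × ℝ =>
        ∫ p : ℝ × ℝ × ℝ, f (Matrix.diagonal ![a.1, a.2, (a.1 * a.2)⁻¹] * uMat p))
      (Set.Ioi (0:ℝ) ×ˢ Set.Ioi (0:ℝ)) ∧
    ∀ a₁ a₂ : ℝ, 0 < a₁ → 0 < a₂ →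
      a₁ ≠ a₂ → a₁ ≠ (a₁ * a₂)⁻¹ → a₂ ≠ (a₁ * a₂)⁻¹ →
      (|a₁ - a₂| * |a₂ - (a₁ * a₂)⁻¹| * |a₁ - (a₁ * a₂)⁻¹|) •
          ∫ p : ℝ × ℝ × ℝ,
            f ((uMat p)⁻¹ * Matrix.diagonal ![a₁, a₂, (a₁ * a₂)⁻¹] * uMat p)
        = (|a₁| ^ 2 * |a₂|) •
            ∫ p : ℝ × ℝ × ℝ,
              f (Matrix.diagonal ![a₁, a₂, (a₁ * a₂)⁻¹] * uMat p) := by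
  have hc : ∀ a, Continuous fun p => f (tMat a p) :=
    fun a => hf.continuous.comp (tMat_continuous a)
  have h1 : ∀ a₁ a₂ : ℝ, 0 < a₁ → 0 < a₂ → (|a₁| ^ 2 * |a₂|) •
      ∫ p : ℝ × ℝ × ℝ, f (Matrix.diagonal ![a₁, a₂, (a₁ * a₂)⁻¹] * uMat p)
        = ∫ p, f (tMat (a₁, a₂) p) := by
    intro a₁ a₂ h₁ h₂
    rw [← integral_shear _ (hc (a₁, a₂)) a₁ a₂ a₁ 0 h₁.ne' h₂.ne' h₁.ne']
    congr 1
    · rw [abs_mul, abs_mul]; ring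
    · exact integral_congr_ae (Filter.Eventually.of_forall fun p =>
        congrArg f (diag_mul_uMat (a₁, a₂) p))
  refine ⟨?_, ?_⟩
  · have hJ : ContDiffOn ℝ (⊤ : ℕ∞) (fun a : ℝ × ℝ => (a.1 ^ 2 * a.2)⁻¹)
        (Set.Ioi (0:ℝ) ×ˢ Set.Ioi (0:ℝ)) := by
      refine ContDiffOn.inv (by fun_prop) ?_
      rintro ⟨x, y⟩ ⟨hx, hy⟩
      exact (mul_pos (pow_pos hx 2) hy).ne'
    refine (hJ.smul (smooth_param f hf hsupp)).congr ?_
    rintro ⟨x, y⟩ ⟨hx, hy⟩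
    have hx : 0 < x := hx
    have hy : 0 < y := hy
    have := h1 x y hx hy
    rw [abs_of_pos hx, abs_of_pos hy] at this
    change _ = (x ^ 2 * y)⁻¹ • ∫ p, f (tMat (x, y) p)
    rw [← this, smul_smul, inv_mul_cancel₀ (by positivity), one_smul]
  · intro a₁ a₂ h₁ h₂ h12 h13 h23
    rw [h1 a₁ a₂ h₁ h₂, ← integral_shear _ (hc (a₁, a₂)) (a₁ - a₂) (a₂ - (a₁ * a₂)⁻¹)
      (a₁ - (a₁ * a₂)⁻¹) (-(a₂ - (a₁ * a₂)⁻¹)) (sub_ne_zero.2 h12) (sub_ne_zero.2 h23)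
      (sub_ne_zero.2 h13)]
    congr 1
    · rw [abs_mul, abs_mul]
    · exact integral_congr_ae (Filter.Eventually.of_forall fun p =>
        congrArg f (conj_uMat (a₁, a₂) p))
end

section
/- Let f : SL(3,ℝ) → ℂ be continuous with compact support and let F_f(λ) = ∫₀^∞ sign(t−1) f(m(t,λ)) dt for 0 < |λ| < 1. Then lim_{λ → 0⁺} λ · F_f(λ) = ∫₀^∞ f( I₃ + s·E₁₂ ) ds, and lim_{λ → 0⁻} |λ| · F_f(λ) = ∫₀^∞ f( I₃ − s·E₁₂ ) ds; i.e. the orbital integral F_f(λ) has a singularity of exact order |λ|⁻¹ as λ → 0, with leading coefficient the unipotent orbital integral ∫₀^∞ f(I₃ + sign(λ)·s·E₁₂) ds. -/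
open MeasureTheory

/-- `SL(3,ℝ)`: the group of 3×3 real matrices of determinant 1. -/
abbrev SL3 := Matrix.SpecialLinearGroup (Fin 3) ℝ

/-- The topology on `SL(3,ℝ)` induced from the space of 3×3 real matrices. -/
noncomputable instance : TopologicalSpace SL3 :=
  TopologicalSpace.induced ((↑) : SL3 → Matrix (Fin 3) (Fin 3) ℝ) inferInstance

/-- The element `m(t,λ) ∈ SL(3,ℝ)` with rows `(√(1-λ²), tλ, 0), (-t⁻¹λ, √(1-λ²), 0),
(0,0,1)`, defined for `t > 0` and `|λ| < 1` (junk value `1` otherwise). -/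
noncomputable def mSL (t lam : ℝ) : SL3 :=
  if h : 0 < t ∧ |lam| < 1 then
    ⟨!![Real.sqrt (1 - lam ^ 2), t * lam, 0;
        -(t⁻¹ * lam), Real.sqrt (1 - lam ^ 2), 0;
        0, 0, 1], by
      have hl := abs_lt.mp h.2
      have h1 : (0:ℝ) ≤ 1 - lam ^ 2 := by nlinarith [hl.1, hl.2]
      have ht : t ≠ 0 := ne_of_gt h.1
      simp [Matrix.det_fin_three, Real.mul_self_sqrt h1]
      field_simp
      ring⟩
  else 1

/-- The orbital integral `F_f(λ) = ∫₀^∞ sign(t-1) · f(m(t,λ)) dt`. -/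
noncomputable def orbF (f : SL3 → ℂ) (lam : ℝ) : ℂ :=
  ∫ t in Set.Ioi (0:ℝ), (Real.sign (t - 1) : ℂ) * f (mSL t lam)

/-- The unipotent element `I₃ + s·E₁₂ ∈ SL(3,ℝ)`. -/
noncomputable def uSL (s : ℝ) : SL3 :=
  ⟨!![1, s, 0; 0, 1, 0; 0, 0, 1], by simp [Matrix.det_fin_three]⟩

theorem sl3_continuous_coe :
    Continuous ((↑) : SL3 → Matrix (Fin 3) (Fin 3) ℝ) :=
  continuous_induced_dom

theorem mSL_coe {t lam : ℝ} (ht : 0 < t) (hl : |lam| < 1) :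
    ((mSL t lam : SL3) : Matrix (Fin 3) (Fin 3) ℝ) =
      !![Real.sqrt (1 - lam ^ 2), t * lam, 0;
        -(t⁻¹ * lam), Real.sqrt (1 - lam ^ 2), 0;
        0, 0, 1] := by
  have h : mSL t lam = _ := dif_pos ⟨ht, hl⟩
  exact congrArg (fun g : SL3 => (g : Matrix (Fin 3) (Fin 3) ℝ)) h

theorem sign_meas : Measurable Real.sign := by
  unfold Real.sign
  exact Measurable.ite measurableSet_Iio measurable_const
    (Measurable.ite measurableSet_Ioi measurable_const measurable_const)

theorem sign_norm_le (x : ℝ) : ‖(Real.sign x : ℂ)‖ ≤ 1 := by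
  rcases Real.sign_apply_eq x with h | h | h <;> simp [h]

/-- The support of `f` is bounded in the `(1,2)` entry. -/
theorem supp_bound (f : SL3 → ℂ) (hsupp : HasCompactSupport f) :
    ∃ R : ℝ, ∀ g : SL3, R < |(g : Matrix (Fin 3) (Fin 3) ℝ) 0 1| → f g = 0 := by
  have hc : Continuous (fun g : SL3 => |(g : Matrix (Fin 3) (Fin 3) ℝ) 0 1|) :=
    (sl3_continuous_coe.matrix_elem 0 1).abs
  obtain ⟨R, hR⟩ := (hsupp.isCompact.image hc).bddAbove
  refine ⟨R, fun g hg => ?_⟩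
  by_contra hne
  exact absurd (hR ⟨g, subset_tsupport f hne, rfl⟩) (not_le.mpr hg)

theorem mSL_continuousOn (e r : ℝ) (he : |e| = 1) (hr : 0 < r) (hr1 : r < 1) :
    ContinuousOn (fun s : ℝ => mSL (r⁻¹ * s) (e * r)) (Set.Ioi 0) := by
  have hl : |e * r| < 1 := by rw [abs_mul, he, one_mul, abs_of_pos hr]; exact hr1
  rw [continuousOn_iff_continuous_domRestrict]
  refine continuous_induced_rng.mpr ?_
  have : (((↑) : SL3 → Matrix (Fin 3) (Fin 3) ℝ) ∘
      (Set.Ioi (0:ℝ)).domRestrict (fun s : ℝ => mSL (r⁻¹ * s) (e * r))) =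
      fun s : Set.Ioi (0:ℝ) => !![Real.sqrt (1 - (e * r) ^ 2), (r⁻¹ * s) * (e * r), 0;
        -((r⁻¹ * (s : ℝ))⁻¹ * (e * r)), Real.sqrt (1 - (e * r) ^ 2), 0;
        0, 0, 1] := by
    funext s
    have hs : (0:ℝ) < s := s.2
    exact mSL_coe (by positivity) hl
  refine Eq.mpr (congrArg Continuous this) ?_
  have h2 : Continuous fun s : Set.Ioi (0:ℝ) => (s : ℝ)⁻¹ := by
    refine Continuous.inv₀ (by fun_prop) fun s => ?_
    have hs : (0:ℝ) < s := s.2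
    exact hs.ne'
  refine continuous_matrix fun i j => ?_
  fin_cases i <;> fin_cases j <;> simp <;> fun_prop

theorem mSL_tendsto (e s : ℝ) (he : |e| = 1) (hs : 0 < s) :
    Filter.Tendsto (fun r : ℝ => mSL (r⁻¹ * s) (e * r)) (nhdsWithin 0 (Set.Ioi 0))
      (nhds (uSL (e * s))) := by
  have hind : Topology.IsInducing ((↑) : SL3 → Matrix (Fin 3) (Fin 3) ℝ) := ⟨rfl⟩
  refine hind.tendsto_nhds_iff.mpr ?_
  have hcont : Continuous fun r : ℝ =>
      (!![Real.sqrt (1 - (e * r) ^ 2), e * s, 0;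
        -(s⁻¹ * e * r ^ 2), Real.sqrt (1 - (e * r) ^ 2), 0;
        0, 0, 1] : Matrix (Fin 3) (Fin 3) ℝ) := by
    refine continuous_matrix fun i j => ?_
    fin_cases i <;> fin_cases j <;> simp <;> fun_prop
  have ht := (hcont.tendsto 0).mono_left (nhdsWithin_le_nhds (s := Set.Ioi 0))
  have hlim : (!![Real.sqrt (1 - (e * 0) ^ 2), e * s, 0;
        -(s⁻¹ * e * 0 ^ 2), Real.sqrt (1 - (e * 0) ^ 2), 0;
        0, 0, 1] : Matrix (Fin 3) (Fin 3) ℝ) =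
        ((uSL (e * s) : SL3) : Matrix (Fin 3) (Fin 3) ℝ) := by
    simp [uSL]
  rw [hlim] at ht
  refine ht.congr' ?_
  filter_upwards [Ioo_mem_nhdsGT (zero_lt_one' ℝ)] with r hr
  have hr0 : 0 < r := hr.1
  have hl : |e * r| < 1 := by rw [abs_mul, he, one_mul, abs_of_pos hr0]; exact hr.2
  have h1 : r⁻¹ * s * (e * r) = e * s := by field_simp
  have h2 : (r⁻¹ * s)⁻¹ * (e * r) = s⁻¹ * e * r ^ 2 := by field_simp
  have h3 := mSL_coe (t := r⁻¹ * s) (by positivity) hl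
  rw [h1, h2] at h3
  exact h3.symm

theorem orbit_aux (f : SL3 → ℂ) (hf : Continuous f) (hsupp : HasCompactSupport f)
    (e : ℝ) (he : |e| = 1) :
    Filter.Tendsto (fun r : ℝ => (r : ℂ) * orbF f (e * r))
      (nhdsWithin 0 (Set.Ioi 0))
      (nhds (∫ s in Set.Ioi (0:ℝ), f (uSL (e * s)))) := by
  obtain ⟨R, hR⟩ := supp_bound f hsupp
  obtain ⟨M, hM⟩ := hsupp.exists_bound_of_continuous hf
  have hM0 : 0 ≤ M := (norm_nonneg _).trans (hM 1)
  have key : Filter.Tendsto (fun r : ℝ => ∫ s in Set.Ioi (0:ℝ),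
      (Real.sign (r⁻¹ * s - 1) : ℂ) * f (mSL (r⁻¹ * s) (e * r)))
      (nhdsWithin 0 (Set.Ioi 0)) (nhds (∫ s in Set.Ioi (0:ℝ), f (uSL (e * s)))) := by
    refine tendsto_integral_filter_of_dominated_convergence
      ((Set.Iic R).indicator fun _ => M) ?_ ?_ ?_ ?_
    · filter_upwards [Ioo_mem_nhdsGT (zero_lt_one' ℝ)] with r hr
      refine AEStronglyMeasurable.mul ?_ ?_
      · exact (Complex.measurable_ofReal.comp
          (sign_meas.comp (by fun_prop))).aestronglyMeasurable
      · exact (hf.comp_continuousOn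
          (mSL_continuousOn e r he hr.1 hr.2)).aestronglyMeasurable measurableSet_Ioi
    · filter_upwards [Ioo_mem_nhdsGT (zero_lt_one' ℝ)] with r hr
      filter_upwards [ae_restrict_mem measurableSet_Ioi] with s hs
      have hs0 : 0 < s := hs
      have hr0 : 0 < r := hr.1
      by_cases hsR : s ≤ R
      · rw [Set.indicator_of_mem (show s ∈ Set.Iic R from hsR), norm_mul]
        calc _ ≤ 1 * M := mul_le_mul (sign_norm_le _) (hM _) (norm_nonneg _) zero_le_one
          _ = M := one_mul M
      · have hl : |e * r| < 1 := by
          rw [abs_mul, he, one_mul, abs_of_pos hr0]; exact hr.2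
        have h1 : r⁻¹ * s * (e * r) = e * s := by field_simp
        have hz : f (mSL (r⁻¹ * s) (e * r)) = 0 := by
          apply hR
          rw [mSL_coe (by positivity) hl, h1]
          simpa [abs_mul, he, abs_of_pos hs0] using hsR
        rw [hz, mul_zero, norm_zero]
        exact Set.indicator_nonneg (fun _ _ => hM0) _
    · rw [integrable_indicator_iff measurableSet_Iic, IntegrableOn,
        Measure.restrict_restrict measurableSet_Iic, Set.inter_comm, Set.Ioi_inter_Iic]
      exact integrableOn_const (by simp)
    · filter_upwards [ae_restrict_mem measurableSet_Ioi] with s hs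
      have hs0 : 0 < s := hs
      refine ((hf.tendsto _).comp (mSL_tendsto e s he hs0)).congr' ?_
      filter_upwards [Ioo_mem_nhdsGT hs0] with r hr
      have hr0 : 0 < r := hr.1
      have h1 : 0 < r⁻¹ * s - 1 := by
        rw [sub_pos, inv_mul_eq_div, one_lt_div hr0]; exact hr.2
      simp [Real.sign_of_pos h1]
  refine key.congr' ?_
  filter_upwards [self_mem_nhdsWithin] with r hr
  have hr0 : 0 < r := hr
  have := integral_comp_mul_left_Ioi
    (fun t : ℝ => (Real.sign (t - 1) : ℂ) * f (mSL t (e * r))) 0 (inv_pos.mpr hr0)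
  simp only [mul_zero, inv_inv, Complex.real_smul] at this
  exact this


/-- As `λ → 0⁺`, `λ·F_f(λ) → ∫₀^∞ f(I₃ + s·E₁₂) ds`, and as `λ → 0⁻`,
`|λ|·F_f(λ) → ∫₀^∞ f(I₃ - s·E₁₂) ds`: the orbital integral has a singularity of exact
order `|λ|⁻¹` with leading coefficient the unipotent orbital integral. -/
theorem orbital_integral_singularity
    (f : SL3 → ℂ) (hf : Continuous f) (hsupp : HasCompactSupport f) :
    Filter.Tendsto (fun lam : ℝ => (lam : ℂ) * orbF f lam)
      (nhdsWithin 0 (Set.Ioi 0))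
      (nhds (∫ s in Set.Ioi (0:ℝ), f (uSL s))) ∧
    Filter.Tendsto (fun lam : ℝ => ((|lam| : ℝ) : ℂ) * orbF f lam)
      (nhdsWithin 0 (Set.Iio 0))
      (nhds (∫ s in Set.Ioi (0:ℝ), f (uSL (-s)))) := by
  constructor
  · simpa using orbit_aux f hf hsupp 1 (by simp)
  · have h := orbit_aux f hf hsupp (-1) (by simp)
    have hn : Filter.Tendsto (fun x : ℝ => -x) (nhdsWithin 0 (Set.Iio 0))
        (nhdsWithin 0 (Set.Ioi 0)) := by
      simpa using tendsto_neg_nhdsLT (a := (0:ℝ))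
    have h2 := h.comp hn
    simp only [neg_mul, one_mul] at h2
    refine h2.congr' ?_
    filter_upwards [self_mem_nhdsWithin] with x hx
    have hx0 : x < 0 := hx
    simp [abs_of_neg hx0]
end

section
/- Let f : SL(3,ℝ) → ℂ be smooth with compact support and K-bi-invariant, let F_f(λ) = ∫₀^∞ sign(t−1) f(m(t,λ)) dt for 0 < |λ| < 1, and define G_f(λ) := |λ| · ( F_f(λ) + F_f(−λ) ). Then for every natural number N there exist complex constants a₀,…,a_N and b₀,…,b_N such that G_f(λ) = ∑_{n=0}^N ( a_n |λ|⁻¹ + b_n ) λ^{2n} + o(λ^{2N}) as λ → 0. -/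
open MeasureTheory Asymptotics Filter Matrix

/-- `K = SO(3)`, the subgroup of `SL(3,ℝ)` of orthogonal matrices. -/
def SO3 : Set SL3 := {k : SL3 | (↑k : Matrix (Fin 3) (Fin 3) ℝ)ᵀ * (↑k : Matrix (Fin 3) (Fin 3) ℝ) = 1}


lemma taylor_bd (h : ℝ → ℂ) (hh : ContDiff ℝ (⊤ : ℕ∞) h) (n : ℕ) (A : ℝ) (hA : 0 < A) :
    ∃ C : ℝ, ∀ x ∈ Set.Icc 0 A, ‖h x - ∑ k ∈ Finset.range (n+1),
      (((k.factorial : ℝ)⁻¹ : ℝ) : ℂ) * iteratedDeriv k h 0 * (x:ℂ)^k‖ ≤ C * x^(n+1) := by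
  obtain ⟨C, hC⟩ := exists_taylor_mean_remainder_bound (f := h) (a := 0) (b := A) (n := n) hA.le
    ((hh.of_le (by exact_mod_cast le_top)).contDiffOn)
  refine ⟨C, fun x hx => ?_⟩
  have := hC x hx
  rw [taylor_within_apply, sub_zero] at this
  refine le_of_eq_of_le ?_ this
  congr 2
  refine Finset.sum_congr rfl fun k hk => ?_
  rw [iteratedDerivWithin_eq_iteratedDeriv (uniqueDiffOn_Icc hA)
    ((hh.of_le (by exact_mod_cast le_top)).contDiffAt) (Set.left_mem_Icc.2 hA.le)]
  rw [Complex.real_smul]; push_cast; ring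

lemma even_deriv (h : ℝ → ℂ) (he : ∀ x, h (-x) = h x) (k : ℕ) (hk : Odd k) :
    iteratedDeriv k h 0 = 0 := by
  have h1 := iteratedDeriv_comp_neg k h 0
  simp only [he, neg_zero, hk.neg_one_pow, neg_smul, one_smul] at h1
  exact self_eq_neg.mp h1

/-- Polynomial approximation at `0+` to order `n`. -/
def TE (n : ℕ) (g : ℝ → ℂ) : Prop :=
  ∃ P : Polynomial ℂ, ∃ C : ℝ, ∀ y ∈ Set.Ioo (0:ℝ) 1, ‖g y - P.eval (y:ℂ)‖ ≤ C * y^n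

lemma TE.add {n : ℕ} {g h : ℝ → ℂ} (hg : TE n g) (hh : TE n h) : TE n (fun y => g y + h y) := by
  obtain ⟨P, C, hP⟩ := hg
  obtain ⟨Q, D, hQ⟩ := hh
  refine ⟨P + Q, C + D, fun y hy => ?_⟩
  have : g y + h y - (P+Q).eval (y:ℂ) = (g y - P.eval (y:ℂ)) + (h y - Q.eval (y:ℂ)) := by
    rw [Polynomial.eval_add]; ring
  rw [this, add_mul]
  exact (norm_add_le _ _).trans (add_le_add (hP y hy) (hQ y hy))

lemma TE.polymul {n : ℕ} {g : ℝ → ℂ} (hg : TE n g) (Q : Polynomial ℂ) :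
    TE n (fun y => Q.eval (y:ℂ) * g y) := by
  obtain ⟨P, C, hP⟩ := hg
  obtain ⟨D, hD⟩ := (isCompact_Icc (a := (0:ℝ)) (b := 1)).exists_bound_of_continuousOn
    (f := fun y : ℝ => Q.eval (y:ℂ)) (by fun_prop)
  refine ⟨Q * P, D * C, fun y hy => ?_⟩
  rw [Polynomial.eval_mul, ← mul_sub, norm_mul, mul_assoc]
  have h1 := hD y ⟨hy.1.le, hy.2.le⟩
  exact mul_le_mul h1 (hP y hy) (norm_nonneg _) ((norm_nonneg _).trans h1)

lemma TE.congr {n : ℕ} {g h : ℝ → ℂ} (hg : TE n g) (e : ∀ y, 0 < y → g y = h y) : TE n h := by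
  obtain ⟨P, C, hP⟩ := hg
  exact ⟨P, C, fun y hy => by rw [← e y hy.1]; exact hP y hy⟩

lemma TE.poly (n : ℕ) (Q : Polynomial ℂ) : TE n (fun y => Q.eval (y:ℂ)) :=
  ⟨Q, 0, fun y hy => by simp⟩

lemma TE.sum {n : ℕ} (s : Finset ℕ) (g : ℕ → ℝ → ℂ) (hg : ∀ k ∈ s, TE n (g k)) :
    TE n (fun y => ∑ k ∈ s, g k y) := by
  induction s using Finset.induction_on with
  | empty => simpa using TE.poly n 0
  | insert a s ha ih =>
    simp only [Finset.sum_insert ha]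
    exact (hg a (by simp)).add (ih fun k hk => hg k (by simp [hk]))

lemma TE.smooth (n : ℕ) (h : ℝ → ℂ) (hh : ContDiff ℝ (⊤ : ℕ∞) h) : TE (n+1) h := by
  obtain ⟨C, hC⟩ := taylor_bd h hh n 1 one_pos
  refine ⟨∑ k ∈ Finset.range (n+1), Polynomial.C ((((k.factorial : ℝ)⁻¹ : ℝ) : ℂ) * iteratedDeriv k h 0)
    * Polynomial.X ^ k, C, fun y hy => ?_⟩
  simpa [Polynomial.eval_finsetSum] using hC y ⟨hy.1.le, hy.2.le⟩

lemma poly_split (P : Polynomial ℂ) (N : ℕ) : ∃ a b : ℕ → ℂ, ∃ Q : Polynomial ℂ, ∀ x : ℂ, x ≠ 0 →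
    P.eval x = ∑ n ∈ Finset.range (N+1), (a n * x⁻¹ + b n) * x^(2*n) + x^(2*N+1) * Q.eval x := by
  induction N with
  | zero =>
    refine ⟨fun _ => 0, fun _ => P.coeff 0, P.divX, fun x hx => ?_⟩
    conv_lhs => rw [← P.divX_mul_X_add]
    simp; ring
  | succ N ih =>
    obtain ⟨a, b, Q, h⟩ := ih
    refine ⟨Function.update a (N+1) (Q.coeff 0), Function.update b (N+1) (Q.divX.coeff 0),
      Q.divX.divX, fun x hx => ?_⟩
    rw [Finset.sum_range_succ, h x hx]
    have e : ∀ n ∈ Finset.range (N+1), (Function.update a (N+1) (Q.coeff 0) n * x⁻¹ +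
      Function.update b (N+1) (Q.divX.coeff 0) n) * x^(2*n) = (a n * x⁻¹ + b n) * x^(2*n) := by
      intro n hn
      have : n ≠ N + 1 := by have := Finset.mem_range.1 hn; omega
      simp [Function.update_of_ne this]
    rw [Finset.sum_congr rfl e]
    conv_lhs => rw [← Q.divX_mul_X_add, ← Q.divX.divX_mul_X_add]
    simp only [Polynomial.eval_add, Polynomial.eval_mul, Polynomial.eval_X, Polynomial.eval_C,
      Function.update_self]
    field_simp
    ring

lemma TE.final {G : ℝ → ℂ} {g : ℝ → ℂ} (N : ℕ) (hg : TE (2*N+1) g)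
    (hG : ∀ l : ℝ, 0 < |l| → |l| < 1/2 → G l = g (2*|l|)) : ∃ a b : ℕ → ℂ,
      (fun lam : ℝ => G lam - ∑ n ∈ Finset.range (N + 1),
                (a n * ((|lam|⁻¹ : ℝ) : ℂ) + b n) * (lam : ℂ) ^ (2 * n))
        =o[nhdsWithin 0 {(0:ℝ)}ᶜ] fun lam : ℝ => lam ^ (2 * N) := by
  obtain ⟨P₀, C₀, hP₀⟩ := hg
  obtain ⟨P, C, hP⟩ : ∃ P : Polynomial ℂ, ∃ C : ℝ, ∀ y ∈ Set.Ioo (0:ℝ) (1/2),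
      ‖g (2*y) - P.eval (y:ℂ)‖ ≤ C * y^(2*N+1) := by
    refine ⟨P₀.comp (Polynomial.C 2 * Polynomial.X), C₀ * 2^(2*N+1), fun y hy => ?_⟩
    have h := hP₀ (2*y) ⟨by linarith [hy.1], by linarith [hy.2]⟩
    rw [mul_pow, ← mul_assoc] at h
    simpa using h
  obtain ⟨a, b, Q, hQ⟩ := poly_split P N
  refine ⟨a, b, ?_⟩
  obtain ⟨D, hD⟩ := (isCompact_Icc (a := (0:ℝ)) (b := 1)).exists_bound_of_continuousOn
    (f := fun y : ℝ => Q.eval (y:ℂ)) (by fun_prop)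
  have hO : (fun lam : ℝ => G lam - ∑ n ∈ Finset.range (N + 1),
                (a n * ((|lam|⁻¹ : ℝ) : ℂ) + b n) * (lam : ℂ) ^ (2 * n))
        =O[nhdsWithin 0 {(0:ℝ)}ᶜ] fun lam : ℝ => lam ^ (2 * N + 1) := by
    apply IsBigO.of_bound (C + D)
    have h1 : ∀ᶠ l : ℝ in nhdsWithin 0 {(0:ℝ)}ᶜ, |l| < 1/2 := by
      apply mem_nhdsWithin_of_mem_nhds
      exact (continuous_abs.tendsto' (0:ℝ) 0 (by simp)).eventually (gt_mem_nhds (by norm_num))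
    filter_upwards [h1, self_mem_nhdsWithin] with l hl hl0
    have hp : 0 < |l| := abs_pos.2 hl0
    have hx : ((|l| : ℝ) : ℂ) ≠ 0 := by exact_mod_cast hp.ne'
    have e : ∀ n, (l : ℂ)^(2*n) = ((|l| : ℝ) : ℂ)^(2*n) := by
      intro n
      rw [pow_mul, pow_mul]; norm_cast; rw [sq_abs]
    simp only [e, Complex.ofReal_inv]
    have e2 := hQ _ hx
    have e3 : G l - ∑ n ∈ Finset.range (N + 1), (a n * ((|l| : ℝ) : ℂ)⁻¹ + b n) * ((|l| : ℝ) : ℂ) ^ (2 * n)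
      = (g (2*|l|) - P.eval ((|l| : ℝ) : ℂ)) + ((|l| : ℝ) : ℂ)^(2*N+1) * Q.eval ((|l| : ℝ) : ℂ) := by
      rw [e2, hG l hp hl]; ring
    rw [e3, norm_pow, Real.norm_eq_abs, add_mul]
    refine (norm_add_le _ _).trans (add_le_add (hP _ ⟨hp, hl⟩) ?_)
    rw [norm_mul, norm_pow, Complex.norm_real, Real.norm_eq_abs, abs_abs, mul_comm]
    exact mul_le_mul_of_nonneg_right (hD _ ⟨hp.le, by linarith⟩) (by positivity)
  refine hO.trans_isLittleO ?_
  exact (Asymptotics.isLittleO_pow_pow (by omega)).mono nhdsWithin_le_nhds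

lemma kern_smooth : ContDiff ℝ (⊤ : ℕ∞) (fun z : ℝ => (((Real.sqrt (1+z^2))⁻¹ : ℝ) : ℂ)) := by
  apply Complex.ofRealCLM.contDiff.comp
  apply ContDiff.inv
  · exact ContDiff.sqrt (by fun_prop) (fun x => by positivity)
  · intro x; positivity

lemma kern_bd (n : ℕ) : ∃ c : ℕ → ℂ, ∃ C : ℝ, 0 ≤ C ∧ ∀ z : ℝ, 0 ≤ z →
    ‖(((Real.sqrt (1+z^2))⁻¹ : ℝ) : ℂ) - ∑ k ∈ Finset.range (n+1), c k * (z:ℂ)^k‖ ≤ C * z^(n+1) := by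
  obtain ⟨C, hC⟩ := taylor_bd _ kern_smooth n 1 one_pos
  set c : ℕ → ℂ := fun k => (((k.factorial : ℝ)⁻¹ : ℝ) : ℂ) *
    iteratedDeriv k (fun z : ℝ => (((Real.sqrt (1+z^2))⁻¹ : ℝ) : ℂ)) 0 with hc
  refine ⟨c, |C| + (1 + ∑ k ∈ Finset.range (n+1), ‖c k‖), by positivity, fun z hz => ?_⟩
  rw [add_mul]
  rcases le_total z 1 with h | h
  · have h1 := hC z ⟨hz, h⟩
    have h2 : 0 ≤ (1 + ∑ k ∈ Finset.range (n+1), ‖c k‖) * z^(n+1) := by positivity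
    have h3 : C * z^(n+1) ≤ |C| * z^(n+1) := by gcongr; exact le_abs_self C
    linarith
  · have h1 : 0 ≤ |C| * z^(n+1) := by positivity
    refine le_trans ?_ (le_add_of_nonneg_left h1)
    refine (norm_sub_le _ _).trans ?_
    rw [add_mul, Finset.sum_mul]
    refine add_le_add ?_ ((norm_sum_le _ _).trans (Finset.sum_le_sum fun k hk => ?_))
    · rw [Complex.norm_real, Real.norm_eq_abs, abs_of_nonneg (by positivity), one_mul]
      refine le_trans (inv_le_one_of_one_le₀ ?_) (one_le_pow₀ h)
      exact Real.one_le_sqrt.2 (by nlinarith)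
    · rw [norm_mul, norm_pow, Complex.norm_real, Real.norm_eq_abs, abs_of_nonneg hz]
      gcongr
      · exact (Finset.mem_range.1 hk).le

lemma cont_kern (y : ℝ) (hy : 0 < y) : Continuous (fun u : ℝ => u / Real.sqrt (u^2+y^2)) := by
  apply Continuous.div (by fun_prop) (by fun_prop)
  intro x; positivity

lemma I_zero (A y : ℝ) (hy : 0 < y) :
    ∫ u in (0:ℝ)..A, u / Real.sqrt (u^2+y^2) = Real.sqrt (A^2+y^2) - y := by
  rw [intervalIntegral.integral_eq_sub_of_hasDerivAt (f := fun u => Real.sqrt (u^2+y^2))]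
  · simp [Real.sqrt_sq hy.le]
  · intro u _
    have h : u^2+y^2 ≠ 0 := by positivity
    refine (((hasDerivAt_pow 2 u).add_const (y^2)).sqrt h).congr_deriv ?_
    field_simp; simp
  · exact (cont_kern y hy).intervalIntegrable _ _

lemma I_succ (A y : ℝ) (hy : 0 < y) (k : ℕ) :
    ∫ u in (0:ℝ)..A, u^(2*(k+1)) * (u / Real.sqrt (u^2+y^2)) =
    (2*(k:ℝ)+3)⁻¹ * (A^(2*(k+1)) * Real.sqrt (A^2+y^2)
      - (2*(k:ℝ)+2) * y^2 * ∫ u in (0:ℝ)..A, u^(2*k) * (u / Real.sqrt (u^2+y^2))) := by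
  have hc := cont_kern y hy
  have h1 : ∫ u in (0:ℝ)..A, ((2*(k:ℝ)+3) * (u^(2*(k+1)) * (u / Real.sqrt (u^2+y^2)))
      + (2*(k:ℝ)+2) * y^2 * (u^(2*k) * (u / Real.sqrt (u^2+y^2)))) = A^(2*(k+1)) * Real.sqrt (A^2+y^2) := by
    rw [intervalIntegral.integral_eq_sub_of_hasDerivAt (f := fun u => u^(2*(k+1)) * Real.sqrt (u^2+y^2))]
    · simp
    · intro u _
      have h : u^2+y^2 ≠ 0 := by positivity
      refine ((hasDerivAt_pow (2*(k+1)) u).mul (((hasDerivAt_pow 2 u).add_const (y^2)).sqrt h)).congr_deriv ?_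
      have hs : Real.sqrt (u^2+y^2) ≠ 0 := by positivity
      have hq : Real.sqrt (u^2+y^2) ^ 2 = u^2+y^2 := Real.sq_sqrt (by positivity)
      have e : 2*(k+1) - 1 = 2*k+1 := by omega
      rw [e]
      field_simp
      rw [hq]
      push_cast
      ring
    · apply Continuous.intervalIntegrable
      fun_prop
  rw [intervalIntegral.integral_add, intervalIntegral.integral_const_mul,
    intervalIntegral.integral_const_mul] at h1
  · have : (2*(k:ℝ)+3) ≠ 0 := by positivity
    rw [eq_inv_mul_iff_mul_eq₀ this]; linarith
  · apply Continuous.intervalIntegrable; fun_prop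
  · apply Continuous.intervalIntegrable; fun_prop

lemma sqrt_TE (n : ℕ) (A : ℝ) (hA : 0 < A) : TE (n+1) (fun y => ((Real.sqrt (A^2+y^2) : ℝ) : ℂ)) := by
  apply TE.smooth
  apply Complex.ofRealCLM.contDiff.comp
  exact ContDiff.sqrt (by fun_prop) (fun x => by positivity)

lemma I_TE (n : ℕ) (A : ℝ) (hA : 0 < A) (k : ℕ) :
    TE (n+1) (fun y => ((∫ u in (0:ℝ)..A, u^(2*k) * (u / Real.sqrt (u^2+y^2)) : ℝ) : ℂ)) := by
  induction k with
  | zero =>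
    refine ((sqrt_TE n A hA).add (TE.poly (n+1) (-Polynomial.X))).congr fun y hy => ?_
    simp only [mul_zero, pow_zero, one_mul, I_zero A y hy]
    simp; ring
  | succ k ih =>
    refine (((sqrt_TE n A hA).polymul (Polynomial.C ((2*(k:ℂ)+3)⁻¹ * (A:ℂ)^(2*(k+1))))).add
      (ih.polymul (Polynomial.C (-((2*(k:ℂ)+3)⁻¹ * (2*(k:ℂ)+2))) * Polynomial.X^2))).congr fun y hy => ?_
    rw [I_succ A y hy]
    simp only [Polynomial.eval_mul, Polynomial.eval_C, Polynomial.eval_pow, Polynomial.eval_X]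
    push_cast
    ring

lemma rem_TE (n : ℕ) (A : ℝ) (hA : 0 < A) (R : ℝ → ℂ) (hR : Continuous R) (C : ℝ)
    (hb : ∀ u ∈ Set.Icc 0 A, ‖R u‖ ≤ C * u^(n+1)) :
    TE (n+1) (fun y => ∫ u in (0:ℝ)..A, R u * ((u / Real.sqrt (u^2+y^2) : ℝ) : ℂ)) := by
  obtain ⟨c, D, hD0, hD⟩ := kern_bd n
  have hint : ∀ k ∈ Finset.range (n+1), IntervalIntegrable (fun u : ℝ => R u * ((u:ℂ)⁻¹)^k) volume 0 A := by
    intro k hk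
    have hk' := Finset.mem_range.1 hk
    rw [intervalIntegrable_iff_integrableOn_Ioc_of_le hA.le]
    refine Measure.integrableOn_of_bounded (M := |C| * A^(n+1-k)) (by simp) ?_ ?_
    · apply Measurable.aestronglyMeasurable
      have := hR.measurable
      fun_prop
    · filter_upwards [ae_restrict_mem measurableSet_Ioc] with u hu
      have h1 := hb u ⟨hu.1.le, hu.2⟩
      have hu0 := hu.1
      rw [norm_mul, norm_pow, norm_inv, Complex.norm_real, Real.norm_eq_abs, abs_of_pos hu0]
      calc ‖R u‖ * u⁻¹^k ≤ (C * u^(n+1)) * u⁻¹^k := by gcongr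
        _ = C * u^(n+1-k) := by
          rw [mul_assoc]; congr 1
          rw [inv_pow, pow_sub₀ _ hu0.ne' hk'.le]
        _ ≤ |C| * A^(n+1-k) := by
          gcongr
          · exact le_abs_self C
          · exact hu.2
  refine ⟨∑ k ∈ Finset.range (n+1), Polynomial.C (c k * ∫ u in (0:ℝ)..A, R u * ((u:ℂ)⁻¹)^k) * Polynomial.X^k,
    C * D * A, fun y hy => ?_⟩
  have hy0 := hy.1
  have hc := cont_kern y hy0
  have e : (Polynomial.eval (y:ℂ) (∑ k ∈ Finset.range (n+1),
      Polynomial.C (c k * ∫ u in (0:ℝ)..A, R u * ((u:ℂ)⁻¹)^k) * Polynomial.X^k))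
      = ∫ u in (0:ℝ)..A, ∑ k ∈ Finset.range (n+1), (c k * (y:ℂ)^k) * (R u * ((u:ℂ)⁻¹)^k) := by
    rw [intervalIntegral.integral_finsetSum fun k hk => (hint k hk).const_mul _]
    simp only [intervalIntegral.integral_const_mul, Polynomial.eval_finsetSum]
    refine Finset.sum_congr rfl fun k hk => ?_
    simp; ring
  have hi2 : IntervalIntegrable (fun u : ℝ => ∑ k ∈ Finset.range (n+1), (c k * (y:ℂ)^k) * (R u * ((u:ℂ)⁻¹)^k)) volume 0 A := by
    have := IntervalIntegrable.sum (Finset.range (n+1)) fun k hk => (hint k hk).const_mul (c k * (y:ℂ)^k)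
    have e : (fun u : ℝ => ∑ k ∈ Finset.range (n+1), (c k * (y:ℂ)^k) * (R u * ((u:ℂ)⁻¹)^k)) =
      ∑ k ∈ Finset.range (n+1), fun u : ℝ => (c k * (y:ℂ)^k) * (R u * ((u:ℂ)⁻¹)^k) := by
      ext u; simp
    rw [e]; exact this
  rw [e, ← intervalIntegral.integral_sub (by apply Continuous.intervalIntegrable; fun_prop) hi2]
  have : C * D * A * y^(n+1) = (C * D * y^(n+1)) * |A - 0| := by rw [sub_zero, abs_of_pos hA]; ring
  rw [this]
  refine intervalIntegral.norm_integral_le_of_norm_le_const fun u hu => ?_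
  rw [Set.uIoc_of_le hA.le] at hu
  have hu0 := hu.1
  have h1 := hb u ⟨hu0.le, hu.2⟩
  have h2 := hD (y/u) (by positivity)
  have e1 : u / Real.sqrt (u^2+y^2) = (Real.sqrt (1+(y/u)^2))⁻¹ := by
    have : u^2+y^2 = u^2 * (1+(y/u)^2) := by field_simp
    rw [this, Real.sqrt_mul (by positivity), Real.sqrt_sq hu0.le]
    field_simp
  have e2 : R u * ((u / Real.sqrt (u^2+y^2) : ℝ) : ℂ) - ∑ k ∈ Finset.range (n+1), (c k * (y:ℂ)^k) * (R u * ((u:ℂ)⁻¹)^k)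
     = R u * ((((Real.sqrt (1+(y/u)^2))⁻¹ : ℝ) : ℂ) - ∑ k ∈ Finset.range (n+1), c k * ((y/u : ℝ):ℂ)^k) := by
    rw [e1, mul_sub, Finset.mul_sum]
    congr 1
    refine Finset.sum_congr rfl fun k hk => ?_
    push_cast
    rw [div_eq_mul_inv, mul_pow]; ring
  rw [e2, norm_mul]
  calc _ ≤ (C * u^(n+1)) * (D * (y/u)^(n+1)) :=
        mul_le_mul h1 h2 (norm_nonneg _) ((norm_nonneg _).trans h1)
    _ = _ := by rw [div_pow]; field_simp

lemma core_TE (n : ℕ) (A : ℝ) (hA : 0 < A) (ψ : ℝ → ℂ) (hψ : ContDiff ℝ (⊤ : ℕ∞) ψ)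
    (he : ∀ x, ψ (-x) = ψ x) :
    TE (n+1) (fun y => ∫ u in (0:ℝ)..A, ψ u * ((u / Real.sqrt (u^2+y^2) : ℝ) : ℂ)) := by
  obtain ⟨C, hC⟩ := taylor_bd ψ hψ n A hA
  set c : ℕ → ℂ := fun k => (((k.factorial : ℝ)⁻¹ : ℝ) : ℂ) * iteratedDeriv k ψ 0 with hc
  have hcont := hψ.continuous
  have h1 := rem_TE n A hA (fun u => ψ u - ∑ k ∈ Finset.range (n+1), c k * (u:ℂ)^k) (by fun_prop) C hC
  have h2 : TE (n+1) (fun y => ∑ k ∈ Finset.range (n+1),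
      c k * ((∫ u in (0:ℝ)..A, u^k * (u / Real.sqrt (u^2+y^2)) : ℝ) : ℂ)) := by
    apply TE.sum
    intro k hk
    rcases Nat.even_or_odd k with ⟨j, hj⟩ | ho
    · have := (I_TE n A hA j).polymul (Polynomial.C (c k))
      rw [hj, ← two_mul] at *
      simpa using this
    · have : c k = 0 := by simp [hc, even_deriv ψ he k ho]
      simpa [this] using TE.poly (n+1) 0
  refine (h1.add h2).congr fun y hy => ?_
  have hk := cont_kern y hy
  simp only [← intervalIntegral.integral_ofReal, ← intervalIntegral.integral_const_mul]
  rw [← intervalIntegral.integral_finsetSum, ← intervalIntegral.integral_add]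
  · refine intervalIntegral.integral_congr fun u _ => ?_
    simp only [sub_mul, Finset.sum_mul]
    push_cast
    simp only [mul_assoc]
    ring
  · apply Continuous.intervalIntegrable; fun_prop
  · apply Continuous.intervalIntegrable; fun_prop
  · intro k hk
    apply Continuous.intervalIntegrable; fun_prop

/-- The unipotent matrix. -/
def nMat (u : ℝ) : Matrix (Fin 3) (Fin 3) ℝ := !![1, u, 0; 0, 1, 0; 0, 0, 1]

lemma nMat_det (u : ℝ) : (nMat u).det = 1 := by simp [nMat, Matrix.det_fin_three]

lemma nMat_smooth : ContDiff ℝ (⊤ : ℕ∞) nMat := by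
  have : nMat = fun u : ℝ => (1 : Matrix (Fin 3) (Fin 3) ℝ) + u • (!![0,1,0;0,0,0;0,0,0] : Matrix (Fin 3) (Fin 3) ℝ) := by
    ext u i j
    fin_cases i <;> fin_cases j <;> simp [nMat]
  rw [this]
  exact contDiff_const.add (contDiff_id.smul contDiff_const)

lemma nMat_even (f : SL3 → ℂ) 
    (hbi : ∀ k₁ ∈ SO3, ∀ k₂ ∈ SO3, ∀ g : SL3, f (k₁ * g * k₂) = f g) (u : ℝ) :
    f ⟨nMat (-u), nMat_det _⟩ = f ⟨nMat u, nMat_det _⟩ := by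
  let k : SL3 := ⟨!![1,0,0;0,-1,0;0,0,-1], by simp [Matrix.det_fin_three]⟩
  have hk : k ∈ SO3 := by
    show (!![1,0,0;0,-1,0;0,0,-1] : Matrix (Fin 3) (Fin 3) ℝ)ᵀ * !![1,0,0;0,-1,0;0,0,-1] = 1
    ext i j
    fin_cases i <;> fin_cases j <;> simp [Matrix.mul_apply, Fin.sum_univ_three]
  refine (hbi k hk k hk _).symm.trans ?_
  congr 1
  apply Subtype.ext
  show (!![1,0,0;0,-1,0;0,0,-1] : Matrix (Fin 3) (Fin 3) ℝ) * nMat (-u) * !![1,0,0;0,-1,0;0,0,-1] = nMat u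
  ext i j
  fin_cases i <;> fin_cases j <;> simp [nMat, Matrix.mul_apply, Fin.sum_univ_three]

lemma exists_rot (a b c d : ℝ) (h : a^2+b^2 = c^2+d^2) (h0 : 0 < a^2+b^2) :
    ∃ p q : ℝ, p^2+q^2 = 1 ∧ (p^2-q^2)*a - 2*p*q*b = c ∧ (p^2-q^2)*b + 2*p*q*a = d := by
  obtain ⟨w, hw⟩ := IsAlgClosed.exists_eq_mul_self ((⟨c,d⟩:ℂ)/⟨a,b⟩)
  have hz : (⟨a,b⟩:ℂ) ≠ 0 := by
    intro h
    have h1 := congrArg Complex.re h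
    have h2 := congrArg Complex.im h
    simp at h1 h2
    simp [h1, h2] at h0
  rw [div_eq_iff hz] at hw
  have hre := congrArg Complex.re hw
  have him := congrArg Complex.im hw
  simp at hre him
  refine ⟨w.re, w.im, ?_, by rw [hre]; ring, by rw [him]; ring⟩
  have key : (w.re^2+w.im^2)^2 * (a^2+b^2) = 1 * (a^2+b^2) := by
    rw [one_mul]; nth_rewrite 2 [h]; rw [hre, him]; ring
  have h4 := mul_right_cancel₀ h0.ne' key
  have : 0 ≤ w.re^2+w.im^2 := by positivity
  nlinarith

lemma f_mSL (f : SL3 → ℂ) 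
    (hbi : ∀ k₁ ∈ SO3, ∀ k₂ ∈ SO3, ∀ g : SL3, f (k₁ * g * k₂) = f g) (t l : ℝ) (ht : 0 < t) (hl : |l| < 1) :
    f (mSL t l) = f ⟨nMat (l * (t - t⁻¹)), nMat_det _⟩ := by
  have hl2 : l^2 < 1 := by rw [← sq_abs]; exact pow_lt_one₀ (abs_nonneg _) hl (by norm_num)
  have hs : Real.sqrt (1-l^2)^2 = 1 - l^2 := Real.sq_sqrt (by linarith)
  set s := Real.sqrt (1-l^2) with hsdef
  obtain ⟨p, q, h1, h2, h3⟩ := exists_rot s (l*(t+t⁻¹)/2) 1 (l*(t-t⁻¹)/2)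
    (by rw [hs]; field_simp; ring) (by rw [hs]; nlinarith [sq_nonneg (l*(t+t⁻¹)/2)])
  let k : SL3 := ⟨!![p,q,0;-q,p,0;0,0,1], by simp [Matrix.det_fin_three]; linarith⟩
  have hk : k ∈ SO3 := by
    show (!![p,q,0;-q,p,0;0,0,1] : Matrix (Fin 3) (Fin 3) ℝ)ᵀ * !![p,q,0;-q,p,0;0,0,1] = 1
    ext i j
    fin_cases i <;> fin_cases j <;> simp [Matrix.mul_apply, Fin.sum_univ_three] <;> linarith
  refine (hbi k hk k hk _).symm.trans ?_
  congr 1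
  apply Subtype.ext
  have hm : ((mSL t l : SL3) : Matrix (Fin 3) (Fin 3) ℝ) = !![s, t*l, 0; -(t⁻¹*l), s, 0; 0,0,1] := by
    simp [mSL, ht, hl, hsdef]
  show (!![p,q,0;-q,p,0;0,0,1] : Matrix (Fin 3) (Fin 3) ℝ) * (mSL t l : SL3) * !![p,q,0;-q,p,0;0,0,1] = nMat (l * (t - t⁻¹))
  rw [hm]
  generalize t⁻¹ = r at *
  have e : l * (t-r)/2 * (p^2+q^2) = l*(t-r)/2 := by rw [h1, mul_one]
  ext i j
  fin_cases i <;> fin_cases j <;> simp [nMat, Matrix.mul_apply, Fin.sum_univ_three] <;> linarith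

lemma integral_fold (h : ℝ → ℂ) (hh : Integrable h) :
    ∫ u, h u = ∫ u in Set.Ioi (0:ℝ), (h u + h (-u)) := by
  rw [integral_add hh.integrableOn hh.comp_neg.integrableOn, integral_comp_neg_Ioi 0 h, neg_zero, add_comm,
    intervalIntegral.integral_Iic_add_Ioi hh.integrableOn hh.integrableOn]

/-- Change of variables. -/
noncomputable def cvT (y u : ℝ) : ℝ := (u + Real.sqrt (u^2+y^2)) / y

lemma abs_lt_sqrt' (y u : ℝ) (hy : 0 < y) : |u| < Real.sqrt (u^2+y^2) := by
  rw [← Real.sqrt_sq_eq_abs]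
  exact Real.sqrt_lt_sqrt (sq_nonneg _) (by nlinarith)

lemma cvT_pos (y u : ℝ) (hy : 0 < y) : 0 < cvT y u := by
  have h1 := abs_lt_sqrt' y u hy
  have h2 := neg_abs_le u
  exact div_pos (by linarith) hy

lemma cvT_inv (y u : ℝ) (hy : 0 < y) : y/2 * (cvT y u - (cvT y u)⁻¹) = u := by
  have hp := cvT_pos y u hy
  have h : Real.sqrt (u^2+y^2)^2 = u^2+y^2 := Real.sq_sqrt (by positivity)
  have e : (cvT y u)⁻¹ = (Real.sqrt (u^2+y^2) - u)/y := by
    rw [inv_eq_iff_eq_inv, eq_comm]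
    apply inv_eq_of_mul_eq_one_left
    rw [cvT]; field_simp; linear_combination h
  rw [e, cvT]; field_simp; ring

lemma cvT_image (y : ℝ) (hy : 0 < y) : cvT y '' Set.univ = Set.Ioi 0 := by
  ext t
  constructor
  · rintro ⟨u, -, rfl⟩; exact cvT_pos y u hy
  · intro ht
    have ht : 0 < t := ht
    refine ⟨y/2*(t-t⁻¹), trivial, ?_⟩
    have : (y/2*(t-t⁻¹))^2+y^2 = (y/2*(t+t⁻¹))^2 := by field_simp; ring
    rw [cvT, this, Real.sqrt_sq (by positivity)]
    field_simp; ring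

lemma cvT_sign (y u : ℝ) (hy : 0 < y) : Real.sign (cvT y u - 1) = Real.sign u := by
  have hp := cvT_pos y u hy
  have h := cvT_inv y u hy
  have h' : u = (y/2) * (cvT y u + 1) * (cvT y u)⁻¹ * (cvT y u - 1) := by
    conv_lhs => rw [← h]
    field_simp; ring
  have hc : 0 < (y/2) * (cvT y u + 1) * (cvT y u)⁻¹ := by positivity
  rcases lt_trichotomy (cvT y u - 1) 0 with h1 | h1 | h1
  · have : u < 0 := by rw [h']; exact mul_neg_of_pos_of_neg hc h1
    rw [Real.sign_of_neg h1, Real.sign_of_neg this]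
  · have : u = 0 := by rw [h', h1, mul_zero]
    rw [h1, this]
  · have : 0 < u := by rw [h']; exact mul_pos hc h1
    rw [Real.sign_of_pos h1, Real.sign_of_pos this]

lemma cvT_deriv (y u : ℝ) (hy : 0 < y) :
    HasDerivAt (cvT y) ((1 + u / Real.sqrt (u^2+y^2))/y) u := by
  have h : u^2+y^2 ≠ 0 := by positivity
  refine (((hasDerivAt_id u).add (((hasDerivAt_pow 2 u).add_const (y^2)).sqrt h)).div_const y).congr_deriv ?_
  congr 2
  field_simp; simp

lemma orb_cv (ψ : ℝ → ℂ) (hψ : Continuous ψ) (he : ∀ x, ψ (-x) = ψ x) (A : ℝ) (hA : 0 < A)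
    (hs : ∀ u, A < |u| → ψ u = 0) (y : ℝ) (hy : 0 < y) :
    ∫ t in Set.Ioi (0:ℝ), (Real.sign (t-1) : ℂ) * ψ (y/2*(t-t⁻¹)) =
      ((2/y : ℝ) : ℂ) * ∫ u in (0:ℝ)..A, ψ u * ((u / Real.sqrt (u^2+y^2) : ℝ) : ℂ) := by
  have hk := cont_kern y hy
  have hψs : HasCompactSupport ψ := by
    apply HasCompactSupport.intro (isCompact_Icc (a := -A) (b := A))
    intro x hx
    apply hs
    by_contra hc
    exact hx (abs_le.1 (not_lt.1 hc))
  rw [← cvT_image y hy, integral_image_eq_integral_abs_deriv_smul MeasurableSet.univ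
    (fun u _ => (cvT_deriv y u hy).hasDerivWithinAt)
    (fun u _ v _ huv => by rw [← cvT_inv y u hy, huv, cvT_inv y v hy])]
  rw [Measure.restrict_univ]
  have hab : ∀ u : ℝ, |(1 + u / Real.sqrt (u^2+y^2))/y| = (1 + u / Real.sqrt (u^2+y^2))/y := by
    intro u
    apply abs_of_nonneg
    apply div_nonneg _ hy.le
    have h1 := abs_lt_sqrt' y u hy
    have h2 := neg_abs_le u
    have h3 : 0 < Real.sqrt (u^2+y^2) := by positivity
    rw [← neg_le_iff_add_nonneg', le_div_iff₀ h3]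
    linarith
  simp only [cvT_inv y _ hy, cvT_sign y _ hy, hab]
  have hmeas : Measurable Real.sign := by
    have : Real.sign = fun r : ℝ => if r < 0 then (-1:ℝ) else if 0 < r then 1 else 0 := rfl
    rw [this]
    exact Measurable.ite measurableSet_Iio measurable_const
      (Measurable.ite measurableSet_Ioi measurable_const measurable_const)
  rw [integral_fold]
  · rw [intervalIntegral.integral_of_le hA.le, ← integral_const_mul]
    have e : ∀ u ∈ Set.Ioi (0:ℝ), (((1 + u / Real.sqrt (u^2+y^2))/y) • ((Real.sign u : ℂ) * ψ u) +
        ((1 + (-u) / Real.sqrt ((-u)^2+y^2))/y) • ((Real.sign (-u) : ℂ) * ψ (-u))) =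
        ((2/y : ℝ) : ℂ) * (ψ u * ((u / Real.sqrt (u^2+y^2) : ℝ) : ℂ)) := by
      intro u hu
      have hu : 0 < u := hu
      rw [Real.sign_of_pos hu, Real.sign_of_neg (neg_neg_of_pos hu), he, neg_sq, Complex.real_smul,
        Complex.real_smul]
      push_cast
      ring
    rw [setIntegral_congr_fun measurableSet_Ioi e]
    refine setIntegral_eq_of_subset_of_forall_sdiff_eq_zero measurableSet_Ioi
      (fun x hx => hx.1) ?_
    intro x hx
    have hx0 : 0 < x := hx.1
    have : A < |x| := by
      rw [abs_of_pos hx0]; by_contra hc; exact hx.2 ⟨hx0, not_lt.1 hc⟩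
    simp [hs x this]
  · have hi : Integrable (fun u : ℝ => (((1 + u / Real.sqrt (u^2+y^2))/y : ℝ) : ℂ) * ψ u) := by
      apply Continuous.integrable_of_hasCompactSupport
      · fun_prop
      · exact hψs.mul_left
    have := hi.bdd_mul (c := 1) (f := fun u : ℝ => (Real.sign u : ℂ))
      (by apply Measurable.aestronglyMeasurable; fun_prop)
      (Eventually.of_forall fun u => by
        rcases Real.sign_apply_eq u with h | h | h <;> simp [h])
    refine this.congr (Eventually.of_forall fun u => ?_)
    simp only [Complex.real_smul]
    ring

/-- For `f` smooth with compact support (i.e. the restriction to `SL(3,ℝ)` of a smooth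
compactly supported function on the matrix space) and `K`-bi-invariant, the function
`G_f(λ) = |λ|·(F_f(λ) + F_f(-λ))` admits, for every `N`, an asymptotic expansion
`G_f(λ) = ∑_{n=0}^N (aₙ|λ|⁻¹ + bₙ) λ^{2n} + o(λ^{2N})` as `λ → 0`. -/
theorem even_combination_asymptotic_expansion
    (f : SL3 → ℂ) (fext : Matrix (Fin 3) (Fin 3) ℝ → ℂ)
    (hsmooth : ContDiff ℝ (⊤ : ℕ∞) fext) (hsupp : HasCompactSupport fext)
    (hrestr : ∀ g : SL3, f g = fext ↑g)
    (hbi : ∀ k₁ ∈ SO3, ∀ k₂ ∈ SO3, ∀ g : SL3, f (k₁ * g * k₂) = f g) :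
    ∀ N : ℕ, ∃ a b : ℕ → ℂ,
      (fun lam : ℝ =>
          ((|lam| : ℝ) : ℂ) * (orbF f lam + orbF f (-lam))
            - ∑ n ∈ Finset.range (N + 1),
                (a n * ((|lam|⁻¹ : ℝ) : ℂ) + b n) * (lam : ℂ) ^ (2 * n))
        =o[nhdsWithin 0 {(0:ℝ)}ᶜ] fun lam : ℝ => lam ^ (2 * N) := by
  intro N
  set ψ : ℝ → ℂ := fun u => fext (nMat u) with hψdef
  have hψf : ∀ u, ψ u = f ⟨nMat u, nMat_det u⟩ := fun u => (hrestr ⟨nMat u, nMat_det u⟩).symm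
  have hψ : ContDiff ℝ (⊤ : ℕ∞) ψ := hsmooth.comp nMat_smooth
  have he : ∀ x, ψ (-x) = ψ x := fun x => by
    rw [hψf, hψf]; exact nMat_even f hbi x
  obtain ⟨A, hA, hs⟩ : ∃ A : ℝ, 0 < A ∧ ∀ u, A < |u| → ψ u = 0 := by
    obtain ⟨B, hB⟩ := hsupp.isCompact.isBounded.exists_norm_le
    refine ⟨max B 1, by positivity, fun u hu => ?_⟩
    by_contra hne
    have h1 := hB (nMat u) (subset_tsupport _ hne)
    have h2 : ‖nMat u 0 1‖ ≤ ‖nMat u‖ := Matrix.norm_entry_le_entrywise_sup_norm _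
    have h3 : nMat u 0 1 = u := by simp [nMat]
    rw [h3, Real.norm_eq_abs] at h2
    have := le_max_left B 1
    linarith
  have hcore := (core_TE (2*N) A hA ψ hψ he).polymul (Polynomial.C 2)
  simp only [Polynomial.eval_C] at hcore
  refine TE.final N hcore fun l hl0 hl1 => ?_
  have hF : ∀ l : ℝ, 0 < |l| → |l| < 1 → orbF f l = ((2/(2*|l|) : ℝ) : ℂ) *
      ∫ u in (0:ℝ)..A, ψ u * ((u / Real.sqrt (u^2+(2*|l|)^2) : ℝ) : ℂ) := by
    intro l h0 h1
    rw [← orb_cv ψ hψ.continuous he A hA hs (2*|l|) (by positivity), orbF]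
    refine setIntegral_congr_fun measurableSet_Ioi fun t ht => ?_
    have ht : 0 < t := ht
    rw [f_mSL f hbi t l ht h1, ← hψf]
    congr 1
    rw [mul_div_cancel_left₀ _ (two_ne_zero)]
    rcases abs_choice l with h | h
    · rw [h]
    · rw [h, ← he]; congr 1; ring
  have hl1' : |l| < 1 := by linarith
  rw [hF l hl0 hl1', hF (-l) (by rwa [abs_neg]) (by rwa [abs_neg]), abs_neg]
  have : ((|l| : ℝ) : ℂ) ≠ 0 := by exact_mod_cast hl0.ne'
  push_cast
  field_simp
  ring
end
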